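/- Let n be even, let r be odd with 1 ≤ r ≤ n-1, and let A = {x ∈ [n]^(r) : |x ∩ {1,…,n/2}| > r/2}. Then the vertex-boundary of A in Γ_n^(r) is b(A) = {x ∈ [n]^(r) : |x ∩ {1,…,n/2}| = (r-1)/2}, and hence |b(A)| = C(n/2, (r-1)/2) · C(n/2, (r+1)/2). -/

import Mathlib

/-!
Let `A` consist of the `r`-subsets `x` of `U` with `|x ∩ L| > t` (below, `U = [n]`, `L = [n/2]` and
`t = r/2`), that is, with `|x ∩ L| > k` for `k = ⌊t⌋`. Adjacent `r`-sets differ by exchanging one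
element for another, so `|x ∩ L|` changes by at most one along an edge and every `x` in the boundary
of `A` has `|x ∩ L| = k`. Conversely, if `|x ∩ L| = k`, then exchanging an element of `x \ L` for
one of `L \ x` leads into `A`; both sets are nonempty because `k < r` and `k < |L|`. The sets with
`|x ∩ L| = k` are counted by choosing `x ∩ L` and `x \ L` independently.
-/

section SliceBoundary

open Finset
open scoped symmDiff

variable {α : Type*} [DecidableEq α]

lemma card_symmDiff_eq_two_mul_card_sdiff {x y : Finset α} (h : #x = #y) :
    #(x ∆ y) = 2 * #(y \ x) := by
  rw [symmDiff_def, sup_eq_union, card_union_of_disjoint disjoint_sdiff_sdiff,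
    card_sdiff_comm h, two_mul]

lemma card_inter_le_card_inter_add_card_sdiff (x y L : Finset α) :
    #(y ∩ L) ≤ #(x ∩ L) + #(y \ x) :=
  calc
    #(y ∩ L) ≤ #((x ∩ L) ∪ (y \ x)) := card_le_card fun c hc => by
      simp only [mem_union, mem_inter, mem_sdiff] at hc ⊢
      tauto
    _ ≤ #(x ∩ L) + #(y \ x) := card_union_le _ _

lemma card_insert_erase_of_mem_of_notMem {x : Finset α} {a b : α} (ha : a ∈ x) (hb : b ∉ x) :
    #(insert b (x.erase a)) = #x := by
  rw [card_insert_of_notMem fun h => hb (mem_of_mem_erase h), card_erase_add_one ha]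

lemma card_symmDiff_insert_erase {x : Finset α} {a b : α} (ha : a ∈ x) (hb : b ∉ x) :
    #(x ∆ insert b (x.erase a)) = 2 := by
  rw [card_symmDiff_eq_two_mul_card_sdiff (card_insert_erase_of_mem_of_notMem ha hb).symm,
    insert_sdiff_of_notMem _ hb, sdiff_eq_empty_iff_subset.mpr (erase_subset a x),
    insert_empty_eq, card_singleton]

lemma card_insert_erase_inter {x L : Finset α} {a b : α} (ha : a ∉ L) (hbL : b ∈ L) (hbx : b ∉ x) :
    #(insert b (x.erase a) ∩ L) = #(x ∩ L) + 1 := by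
  rw [insert_inter_of_mem hbL, erase_inter,
    erase_eq_of_notMem fun h => ha (mem_of_mem_inter_right h),
    card_insert_of_notMem fun h => hbx (mem_of_mem_inter_left h)]

lemma card_inter_le_add_one_of_card_symmDiff_eq_two {x y : Finset α} (L : Finset α)
    (hcard : #x = #y) (hadj : #(x ∆ y) = 2) : #(y ∩ L) ≤ #(x ∩ L) + 1 := by
  have hdiff := card_symmDiff_eq_two_mul_card_sdiff hcard
  have hinter := card_inter_le_card_inter_add_card_sdiff x y L
  omega

lemma exists_card_symmDiff_eq_two_card_inter_eq_add_one {U L x : Finset α} (hLU : L ⊆ U)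
    (hxU : x ⊆ U) (hx : #(x ∩ L) < #x) (hL : #(x ∩ L) < #L) :
    ∃ y ∈ U.powersetCard #x, #(y ∩ L) = #(x ∩ L) + 1 ∧ #(x ∆ y) = 2 := by
  obtain ⟨a, hax, haxL⟩ := exists_mem_notMem_of_card_lt_card hx
  have haL : a ∉ L := fun haL => haxL (mem_inter_of_mem hax haL)
  obtain ⟨b, hbL, hbxL⟩ := exists_mem_notMem_of_card_lt_card hL
  have hbx : b ∉ x := fun hbx => hbxL (mem_inter_of_mem hbx hbL)
  refine ⟨insert b (x.erase a), mem_powersetCard.mpr ⟨?_, ?_⟩, ?_, ?_⟩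
  · exact insert_subset (hLU hbL) ((erase_subset a x).trans hxU)
  · exact card_insert_erase_of_mem_of_notMem hax hbx
  · exact card_insert_erase_inter haL hbL hbx
  · exact card_symmDiff_insert_erase hax hbx

/-- The vertex-boundary of a family `A` of `r`-subsets of `U`, in the graph on all `r`-subsets of
`U` in which two sets are adjacent when their symmetric difference has two elements. That `A`
consists of `r`-subsets of `U` is not built into the type. -/
def vertexBoundary (U : Finset α) (r : ℕ) (A : Finset (Finset α)) : Finset (Finset α) :=
  {x ∈ U.powersetCard r | x ∉ A ∧ ∃ y ∈ A, #(x ∆ y) = 2}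

theorem vertexBoundary_filter_lt_card_inter {U L : Finset α} {r k : ℕ} (hLU : L ⊆ U)
    (hkL : k < #L) (hkr : k < r) :
    vertexBoundary U r {x ∈ U.powersetCard r | k < #(x ∩ L)} =
      {x ∈ U.powersetCard r | #(x ∩ L) = k} := by
  refine filter_congr fun x hx => ?_
  obtain ⟨hxU, rfl⟩ := mem_powersetCard.mp hx
  simp only [mem_filter, hx, true_and, not_lt]
  constructor
  · rintro ⟨hxk, y, ⟨hy, hky⟩, hadj⟩
    have hstep := card_inter_le_add_one_of_card_symmDiff_eq_two L
      (mem_powersetCard.mp hy).2.symm hadj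
    omega
  · rintro rfl
    obtain ⟨y, hy, hyL, hadj⟩ :=
      exists_card_symmDiff_eq_two_card_inter_eq_add_one hLU hxU hkr hkL
    exact ⟨le_rfl, y, ⟨hy, by omega⟩, hadj⟩

lemma union_inter_eq_left_of_subset_of_disjoint {p q L : Finset α} (hp : p ⊆ L)
    (hq : Disjoint q L) : (p ∪ q) ∩ L = p := by
  rw [union_inter_distrib_right, inter_eq_left.mpr hp, disjoint_iff_inter_eq_empty.mp hq,
    union_empty]

lemma union_sdiff_eq_right_of_subset_of_disjoint {p q L : Finset α} (hp : p ⊆ L)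
    (hq : Disjoint q L) : (p ∪ q) \ L = q := by
  rw [union_sdiff_distrib, sdiff_eq_empty_iff_subset.mpr hp, empty_union,
    sdiff_eq_self_of_disjoint hq]

theorem card_filter_powersetCard_card_inter_eq {U L : Finset α} {r k : ℕ} (hLU : L ⊆ U)
    (hkr : k ≤ r) :
    #{x ∈ U.powersetCard r | #(x ∩ L) = k} = (#L).choose k * (#U - #L).choose (r - k) := by
  rw [← card_sdiff_of_subset hLU, ← card_powersetCard, ← card_powersetCard, ← card_product]
  refine card_nbij' (fun x => (x ∩ L, x \ L)) (fun p => p.1 ∪ p.2) ?_ ?_ ?_ ?_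
  · intro x hx
    simp only [mem_coe, mem_filter, mem_powersetCard, mem_product] at hx ⊢
    obtain ⟨⟨hxU, rfl⟩, rfl⟩ := hx
    exact ⟨⟨inter_subset_right, rfl⟩, sdiff_subset_sdiff hxU le_rfl,
      Nat.eq_sub_of_add_eq (card_sdiff_add_card_inter x L)⟩
  · rintro ⟨p, q⟩ hpq
    simp only [mem_coe, mem_filter, mem_powersetCard, mem_product] at hpq ⊢
    obtain ⟨⟨hp, hpcard⟩, hq, hqcard⟩ := hpq
    have hqL : Disjoint q L := disjoint_of_subset_left hq sdiff_disjoint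
    refine ⟨⟨union_subset (hp.trans hLU) (hq.trans sdiff_subset), ?_⟩, ?_⟩
    · rw [card_union_of_disjoint (disjoint_of_subset_left hp hqL.symm), hpcard, hqcard,
        Nat.add_sub_cancel' hkr]
    · rw [union_inter_eq_left_of_subset_of_disjoint hp hqL, hpcard]
  · intro x _
    exact (union_comm _ _).trans (sdiff_union_inter x L)
  · rintro ⟨p, q⟩ hpq
    simp only [mem_coe, mem_powersetCard, mem_product] at hpq
    obtain ⟨⟨hp, -⟩, hq, -⟩ := hpq
    have hqL : Disjoint q L := disjoint_of_subset_left hq sdiff_disjoint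
    exact Prod.ext (union_inter_eq_left_of_subset_of_disjoint hp hqL)
      (union_sdiff_eq_right_of_subset_of_disjoint hp hqL)

theorem stmt_10_general {U L : Finset α} {r : ℕ} {t : ℝ} (hLU : L ⊆ U) (ht : 0 ≤ t)
    (htL : t < #L) (htr : t < r) :
    vertexBoundary U r {x ∈ U.powersetCard r | t < #(x ∩ L)} =
        {x ∈ U.powersetCard r | #(x ∩ L) = ⌊t⌋₊} ∧
      #(vertexBoundary U r {x ∈ U.powersetCard r | t < #(x ∩ L)}) =
        (#L).choose ⌊t⌋₊ * (#U - #L).choose (r - ⌊t⌋₊) := by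
  simp only [← Nat.floor_lt ht] at htL htr ⊢
  rw [vertexBoundary_filter_lt_card_inter hLU htL htr]
  exact ⟨rfl, card_filter_powersetCard_card_inter_eq hLU htr.le⟩

end SliceBoundary

/-- For `n` even and `r` odd, the family `A = {x ∈ [n]^(r) : |x ∩ {1,…,n/2}| > r/2}` has
vertex-boundary (in the graph `Γ_n^(r)`, `x ~ y` iff `|x Δ y| = 2`)
`b(A) = {x ∈ [n]^(r) : |x ∩ {1,…,n/2}| = (r-1)/2}`, and hence
`|b(A)| = C(n/2,(r-1)/2)·C(n/2,(r+1)/2)`. -/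
theorem stmt_10 (n r : ℕ) (hn : Even n) (hr : Odd r) (hr1 : 1 ≤ r) (hrn : r ≤ n - 1)
    (A : Finset (Finset ℕ))
    (hA : A = ((Finset.Icc 1 n).powersetCard r).filter
        (fun x => ((x ∩ Finset.Icc 1 (n / 2)).card : ℝ) > (r : ℝ) / 2)) :
    ((Finset.Icc 1 n).powersetCard r).filter
        (fun x => x ∉ A ∧ ∃ y ∈ A, (symmDiff x y).card = 2)
      = ((Finset.Icc 1 n).powersetCard r).filter
        (fun x => (x ∩ Finset.Icc 1 (n / 2)).card = (r - 1) / 2)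
    ∧ (((Finset.Icc 1 n).powersetCard r).filter
        (fun x => x ∉ A ∧ ∃ y ∈ A, (symmDiff x y).card = 2)).card
      = (n / 2).choose ((r - 1) / 2) * (n / 2).choose ((r + 1) / 2) := by
  have hfloor : ⌊(r : ℝ) / 2⌋₊ = (r - 1) / 2 := by
    rw [Nat.floor_div_ofNat, Nat.floor_natCast]
    grind
  have hcompl : n - n / 2 = n / 2 := by grind
  have hrest : r - (r - 1) / 2 = (r + 1) / 2 := by grind
  have hhalf : (r : ℝ) / 2 < (Finset.Icc 1 (n / 2)).card := by
    rw [Nat.card_Icc, Nat.add_sub_cancel, Nat.cast_div hn.two_dvd two_ne_zero, Nat.cast_ofNat]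
    gcongr
    omega
  have hlt : (r : ℝ) / 2 < r := half_lt_self (by exact_mod_cast hr1)
  have main := stmt_10_general (Finset.Icc_subset_Icc_right (Nat.div_le_self n 2))
    (by positivity) hhalf hlt
  rw [hfloor, Nat.card_Icc, Nat.card_Icc, Nat.add_sub_cancel, Nat.add_sub_cancel, hcompl,
    hrest] at main
  subst hA
  exact main
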